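/- Let a, b satisfy either a, b \in (-1,\infty) with ab > 0, or a, b \in \mathbb{C} \setminus \{0\} with b = \overline{a}; let c be a positive real number with c > \mathrm{Re}(a+b) + 1, and let \alpha \in \mathbb{C} with |\alpha| < 1. If |\alpha| \cdot \frac{\Gamma(c)\Gamma(c-a-b)}{\Gamma(c-a)\Gamma(c-b)} \cdot \frac{2ab + c - a - b - 1}{c - a - b - 1} \leq 2 (this quantity being a positive real number), then the Taylor coefficients b_{n+1} = \frac{\alpha}{2} \frac{(a)_n (b)_n}{(c)_n n! (n+1)} of g_3(z) = (\alpha/2) \int_0^z F(a,b;c;t)\,dt satisfy \sum_{n=1}^{\infty} n(2n-1)|b_n| \leq 1; consequently f_3(z) = z + \overline{(\alpha/2) \int_0^z F(a,b;c;t)\,dt} is uniformly convex in \mathbb{D}. -/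

import Mathlib

open Complex Metric ComplexConjugate

noncomputable section

/-- The Pochhammer symbol `(x)ₙ = x(x+1)⋯(x+n-1)` for `x : ℂ`. -/
def poch (x : ℂ) (n : ℕ) : ℂ := (ascPochhammer ℂ n).eval x

/-- The primitive `∫₀ᶻ F(a,b;c;t) dt = ∑ (a)ₙ(b)ₙ/((c)ₙ n! (n+1)) z^{n+1}` of the
Gaussian hypergeometric function. -/
def hypFPrim (a b c z : ℂ) : ℂ :=
  ∑' n : ℕ, poch a n * poch b n
    / (poch c n * (Nat.factorial n : ℂ) * (n + 1 : ℂ)) * z ^ (n + 1)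

/-- The necessary and sufficient condition (due to Kanas–Ponnusamy–Sairam) for a
sense-preserving harmonic mapping `f = h + conj g` to be uniformly convex in the unit
disk, taken here as the formal definition of "uniformly convex in `𝔻`". -/
def UniformlyConvexOnDisk (h g : ℂ → ℂ) : Prop :=
  ∀ z ∈ ball (0:ℂ) 1, ∀ ζ ∈ ball (0:ℂ) 1, z ≠ ζ →
    0 ≤ (((z - ζ) * deriv h z + (z - ζ) ^ 2 * deriv (deriv h) z
          + conj ((z - ζ) * deriv g z) + conj ((z - ζ) ^ 2 * deriv (deriv g) z))
        / ((z - ζ) * deriv h z - conj ((z - ζ) * deriv g z))).re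

/-- The Taylor coefficient `b_{n+1} = (α/2) (a)ₙ(b)ₙ/((c)ₙ n! (n+1))` of
`g₃(z) = (α/2) ∫₀ᶻ F(a,b;c;t) dt`. -/
def bc3 (a b c α : ℂ) (n : ℕ) : ℂ :=
  α / 2 * (poch a n * poch b n) / (poch c n * (Nat.factorial n : ℂ) * (n + 1 : ℂ))

/-!
Write `tₙ = (a)ₙ (b)ₙ / ((c)ₙ n!)`. Since `n (2n - 1) ‖bₙ‖ = ‖α‖ / 2 * (2n - 1) tₙ₋₁` for
nonnegative `tₙ`, the coefficient sum is `‖α‖ / 2 * ∑ (2n + 1) tₙ`. Here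
`n tₙ(a, b, c) = (a b / c) tₙ₋₁(a + 1, b + 1, c + 1)`, so both parts are values of `₂F₁` at `1`,
given by Gauss' formula. That formula follows by iterating the contiguous relation
`c (c - a - b) F(a, b; c; 1) = (c - a) (c - b) F(a, b; c + 1; 1)` and letting `c` tend to infinity.

The bound on the coefficient sum gives `‖g'‖ + 2 ‖g''‖ ≤ 1` on the disk. The quotient `N / D`
defining uniform convexity then has nonnegative real part because `‖N - D‖ ≤ ‖N + D‖`.
-/

open Filter Asymptotics Topology
open scoped Nat

theorem add_natCast_ne_neg_natCast {R : Type*} [AddCommGroupWithOne R] {x : R}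
    (hx : ∀ m : ℕ, x ≠ -m) (k m : ℕ) : x + k ≠ -m := fun h =>
  hx (m + k) (by rw [Nat.cast_add, neg_add, ← h, ← sub_eq_add_neg, add_sub_cancel_right])

theorem add_one_ne_neg_natCast {R : Type*} [AddCommGroupWithOne R] {x : R}
    (hx : ∀ m : ℕ, x ≠ -m) (m : ℕ) : x + 1 ≠ -m :=
  Nat.cast_one (R := R) ▸ add_natCast_ne_neg_natCast hx 1 m

theorem sub_one_ne_zero_of_one_lt_re {z : ℂ} (hz : 1 < z.re) : z - 1 ≠ 0 := fun h => by
  rw [sub_eq_zero.mp h, one_re] at hz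
  exact lt_irrefl _ hz

section Pochhammer

theorem ascPochhammer_eval_eq_prod_range {R : Type*} [CommSemiring R] (n : ℕ) (x : R) :
    (ascPochhammer R n).eval x = ∏ j ∈ Finset.range n, (x + j) := by
  induction n with
  | zero => simp
  | succ n ih => rw [ascPochhammer_succ_eval, Finset.prod_range_succ, ih]

theorem ascPochhammer_succ_eval_left {R : Type*} [CommSemiring R] (n : ℕ) (x : R) :
    (ascPochhammer R (n + 1)).eval x = x * (ascPochhammer R n).eval (x + 1) := by
  simp [ascPochhammer_succ_left]

theorem ascPochhammer_eval_ne_zero {R : Type*} [Ring R] [IsDomain R] {x : R}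
    (hx : ∀ m : ℕ, x ≠ -m) (n : ℕ) : (ascPochhammer R n).eval x ≠ 0 := by
  rw [Ne, ascPochhammer_eval_eq_zero_iff]
  rintro ⟨k, -, hk⟩
  exact hx k (by rw [hk, neg_neg])

theorem ascPochhammer_eval_le_norm {x : ℝ} (hx : 0 < x) {z : ℂ} (hz : x ≤ z.re) (n : ℕ) :
    (ascPochhammer ℝ n).eval x ≤ ‖(ascPochhammer ℂ n).eval z‖ := by
  rw [ascPochhammer_eval_eq_prod_range, ascPochhammer_eval_eq_prod_range, norm_prod]
  refine Finset.prod_le_prod (fun j _ => by positivity) fun j _ => ?_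
  calc x + j ≤ (z + j).re := by simpa using hz
    _ ≤ ‖z + j‖ := re_le_norm _

theorem tendsto_ascPochhammer_eval_div_inv_Gamma (x : ℂ) :
    Tendsto (fun n : ℕ => (ascPochhammer ℂ (n + 1)).eval x / ((n : ℂ) ^ x * n !)) atTop
      (𝓝 (Gamma x)⁻¹) := by
  by_cases hx : Gamma x = 0
  · obtain ⟨m, rfl⟩ := (Gamma_eq_zero_iff x).mp hx
    rw [hx, inv_zero]
    refine tendsto_const_nhds.congr' ?_
    filter_upwards [eventually_ge_atTop m] with n hn
    rw [ascPochhammer_eval_neg_coe_nat_of_lt (by lia), zero_div]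
  · refine ((GammaSeq_tendsto_Gamma x).inv₀ hx).congr fun n => ?_
    rw [GammaSeq, inv_div, ascPochhammer_eval_eq_prod_range]

end Pochhammer

section Coefficient

variable {𝕂 : Type*} [Field 𝕂] {a b c : 𝕂} {n : ℕ}

theorem add_mul_ordinaryHypergeometricCoefficient_add_one (hc : c ≠ 0) (hcn : c + n ≠ 0) :
    (c + n) * ordinaryHypergeometricCoefficient a b (c + 1) n
      = c * ordinaryHypergeometricCoefficient a b c n := by
  have h : (c * (ascPochhammer 𝕂 n).eval (c + 1))⁻¹ = ((ascPochhammer 𝕂 n).eval c * (c + n))⁻¹ := by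
    rw [← ascPochhammer_succ_eval_left, ascPochhammer_succ_eval]
  rw [mul_inv, mul_inv, inv_mul_eq_iff_eq_mul₀ hc, ← mul_assoc, eq_mul_inv_iff_mul_eq₀ hcn] at h
  linear_combination (n ! : 𝕂)⁻¹ * (ascPochhammer 𝕂 n).eval a * (ascPochhammer 𝕂 n).eval b * h

variable [CharZero 𝕂]

theorem succ_mul_ordinaryHypergeometricCoefficient_succ (a b c : 𝕂) (n : ℕ) :
    ((n + 1 : ℕ) : 𝕂) * ordinaryHypergeometricCoefficient a b c (n + 1)
      = a * b / c * ordinaryHypergeometricCoefficient (a + 1) (b + 1) (c + 1) n := by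
  have hn : ((n + 1 : ℕ) : 𝕂) ≠ 0 := Nat.cast_ne_zero.mpr n.succ_ne_zero
  simp only [ordinaryHypergeometricCoefficient, ascPochhammer_succ_eval_left, Nat.factorial_succ,
    Nat.cast_mul, mul_inv]
  field_simp

theorem succ_mul_add_mul_ordinaryHypergeometricCoefficient_succ (hcn : c + n ≠ 0) :
    ((n + 1 : ℕ) : 𝕂) * (c + n) * ordinaryHypergeometricCoefficient a b c (n + 1)
      = (a + n) * (b + n) * ordinaryHypergeometricCoefficient a b c n := by
  have hn : ((n + 1 : ℕ) : 𝕂) ≠ 0 := Nat.cast_ne_zero.mpr n.succ_ne_zero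
  simp only [ordinaryHypergeometricCoefficient, ascPochhammer_succ_eval, Nat.factorial_succ,
    Nat.cast_mul, mul_inv]
  field_simp

end Coefficient

section GaussSummation

variable {a b c : ℂ}

theorem tendsto_ordinaryHypergeometricCoefficient_div_cpow (hc : ∀ m : ℕ, c ≠ -m) :
    Tendsto (fun n : ℕ =>
        ordinaryHypergeometricCoefficient a b c (n + 1) / (n : ℂ) ^ (a + b - c - 1)) atTop
      (𝓝 (Gamma c / (Gamma a * Gamma b))) := by
  have hΓc : (Gamma c)⁻¹ ≠ 0 := inv_ne_zero (Gamma_ne_zero hc)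
  have hlim := ((tendsto_ascPochhammer_eval_div_inv_Gamma a).mul
    (tendsto_ascPochhammer_eval_div_inv_Gamma b)).div
    ((tendsto_ascPochhammer_eval_div_inv_Gamma c).mul
      (tendsto_ascPochhammer_eval_div_inv_Gamma 1)) (by simpa [Gamma_one] using hΓc)
  have hvalue : (Gamma a)⁻¹ * (Gamma b)⁻¹ / ((Gamma c)⁻¹ * (Gamma 1)⁻¹)
      = Gamma c / (Gamma a * Gamma b) := by
    rw [Gamma_one, inv_one, mul_one, div_inv_eq_mul, ← mul_inv, div_eq_inv_mul]
  rw [← hvalue]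
  refine hlim.congr' ?_
  filter_upwards [eventually_ne_atTop 0] with n hn
  have hn' : (n : ℂ) ≠ 0 := Nat.cast_ne_zero.mpr hn
  have hfact : (n ! : ℂ) ≠ 0 := Nat.cast_ne_zero.mpr n.factorial_ne_zero
  have hfact' : ((n + 1)! : ℂ) ≠ 0 := Nat.cast_ne_zero.mpr (n + 1).factorial_ne_zero
  have hcn := ascPochhammer_eval_ne_zero hc (n + 1)
  have hpow (x : ℂ) : (n : ℂ) ^ x ≠ 0 := by simp [cpow_eq_zero_iff, hn']
  have hexp : (n : ℂ) ^ (a + b - c - 1) = n ^ a * n ^ b / (n ^ c * n ^ (1 : ℂ)) := by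
    rw [cpow_sub _ _ hn', cpow_sub _ _ hn', cpow_add _ _ hn', div_div]
  simp only [Pi.div_apply, hexp, ordinaryHypergeometricCoefficient, ascPochhammer_eval_one,
    cpow_one]
  field_simp [hpow]

theorem isBigO_ordinaryHypergeometricCoefficient (hc : ∀ m : ℕ, c ≠ -m) :
    (fun n : ℕ => ordinaryHypergeometricCoefficient a b c (n + 1)) =O[atTop]
      fun n : ℕ => (n : ℝ) ^ ((a + b - c).re - 1) := by
  have hO : (fun n : ℕ => ordinaryHypergeometricCoefficient a b c (n + 1)) =O[atTop]
      fun n : ℕ => (n : ℂ) ^ (a + b - c - 1) := by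
    refine isBigO_of_div_tendsto_nhds ?_ _ (tendsto_ordinaryHypergeometricCoefficient_div_cpow hc)
    filter_upwards [eventually_ne_atTop 0] with n hn hzero
    simp [cpow_eq_zero_iff, hn] at hzero
  refine hO.trans (IsBigO.of_bound' ?_)
  filter_upwards [eventually_gt_atTop 0] with n hn
  rw [norm_natCast_cpow_of_pos hn, sub_re, one_re]
  exact Real.le_norm_self _

theorem summable_ordinaryHypergeometricCoefficient (hc : ∀ m : ℕ, c ≠ -m)
    (hre : 0 < (c - a - b).re) : Summable (ordinaryHypergeometricCoefficient a b c) := by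
  rw [← summable_nat_add_iff 1]
  refine summable_of_isBigO_nat (Real.summable_nat_rpow.mpr ?_)
    (isBigO_ordinaryHypergeometricCoefficient hc)
  simp only [sub_re, add_re] at hre ⊢
  linarith

theorem tendsto_ordinaryHypergeometricCoefficient_zero (hc : ∀ m : ℕ, c ≠ -m)
    (hre : -1 < (c - a - b).re) :
    Tendsto (ordinaryHypergeometricCoefficient a b c) atTop (𝓝 0) := by
  rw [← tendsto_add_atTop_iff_nat 1]
  refine (isBigO_ordinaryHypergeometricCoefficient hc).trans_tendsto ?_
  have hexp : (a + b - c).re - 1 = -((c - a - b).re + 1) := by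
    simp only [sub_re, add_re]
    ring
  rw [hexp]
  exact (tendsto_rpow_neg_atTop (by linarith)).comp tendsto_natCast_atTop_atTop

theorem hasSum_ordinaryHypergeometric_one (hc : ∀ m : ℕ, c ≠ -m) (hre : 0 < (c - a - b).re) :
    HasSum (ordinaryHypergeometricCoefficient a b c) (₂F₁ a b c (1 : ℂ)) := by
  simpa [ordinaryHypergeometric_eq_tsum] using
    (summable_ordinaryHypergeometricCoefficient hc hre).hasSum

theorem tendsto_natCast_mul_ordinaryHypergeometricCoefficient (hc : ∀ m : ℕ, c ≠ -m)
    (hre : 0 < (c - a - b).re) :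
    Tendsto (fun n : ℕ => (n : ℂ) * ordinaryHypergeometricCoefficient a b c n) atTop (𝓝 0) := by
  rw [← tendsto_add_atTop_iff_nat 1]
  simp_rw [succ_mul_ordinaryHypergeometricCoefficient_succ]
  have hre' : -1 < (c + 1 - (a + 1) - (b + 1)).re := by
    simp only [sub_re, add_re, one_re] at hre ⊢
    linarith
  simpa using (tendsto_ordinaryHypergeometricCoefficient_zero
    (add_one_ne_neg_natCast hc) hre').const_mul (a * b / c)

-- The two series differ termwise by the telescoping `c * (n * tₙ - (n + 1) * tₙ₊₁)`, where
-- `tₙ` is the `n`-th coefficient of `₂F₁ a b c`.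
theorem ordinaryHypergeometric_one_contiguous (hc : ∀ m : ℕ, c ≠ -m)
    (hre : 0 < (c - a - b).re) :
    c * (c - a - b) * ₂F₁ a b c (1 : ℂ) = (c - a) * (c - b) * ₂F₁ a b (c + 1) (1 : ℂ) := by
  have hre' : 0 < (c + 1 - a - b).re := by
    simp only [sub_re, add_re, one_re] at hre ⊢
    linarith
  have hdiff := ((hasSum_ordinaryHypergeometric_one hc hre).mul_left (c * (c - a - b))).sub
    ((hasSum_ordinaryHypergeometric_one (add_one_ne_neg_natCast hc) hre').mul_left
      ((c - a) * (c - b)))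
  set t := ordinaryHypergeometricCoefficient a b c
  have hterm (n : ℕ) : c * (c - a - b) * t n
        - (c - a) * (c - b) * ordinaryHypergeometricCoefficient a b (c + 1) n
      = c * (n * t n) - c * ((n + 1 : ℕ) * t (n + 1)) := by
    have hc0 : c ≠ 0 := by simpa using hc 0
    have hcn : c + n ≠ 0 := fun h => hc n (eq_neg_of_add_eq_zero_left h)
    have hup := add_mul_ordinaryHypergeometricCoefficient_add_one (a := a) (b := b) hc0 hcn
    have hsucc := succ_mul_add_mul_ordinaryHypergeometricCoefficient_succ (a := a) (b := b) hcn
    refine mul_left_cancel₀ hcn ?_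
    linear_combination (-(c - a) * (c - b)) * hup + c * hsucc
  have hzero : Tendsto (fun N : ℕ => -(c * (N * t N))) atTop (𝓝 0) := by
    simpa using ((tendsto_natCast_mul_ordinaryHypergeometricCoefficient hc hre).const_mul c).neg
  refine sub_eq_zero.mp (tendsto_nhds_unique (hdiff.tendsto_sum_nat.congr fun N => ?_) hzero)
  rw [Finset.sum_congr rfl fun n _ => hterm n, Finset.sum_range_sub' fun n : ℕ => c * (n * t n)]
  simp

theorem ordinaryHypergeometric_one_contiguous_iterate (hc : ∀ m : ℕ, c ≠ -m)
    (hre : 0 < (c - a - b).re) (N : ℕ) :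
    (ascPochhammer ℂ N).eval c * (ascPochhammer ℂ N).eval (c - a - b) * ₂F₁ a b c (1 : ℂ)
      = (ascPochhammer ℂ N).eval (c - a) * (ascPochhammer ℂ N).eval (c - b)
        * ₂F₁ a b (c + N) (1 : ℂ) := by
  induction N with
  | zero => simp
  | succ N ih =>
    have hcN := add_natCast_ne_neg_natCast hc N
    have hreN : 0 < (c + N - a - b).re := by
      simp only [sub_re, add_re, natCast_re] at hre ⊢
      linarith [N.cast_nonneg (α := ℝ)]
    have hstep := ordinaryHypergeometric_one_contiguous hcN hreN
    rw [add_assoc, ← Nat.cast_succ] at hstep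
    simp only [ascPochhammer_succ_eval]
    linear_combination (c + N) * (c - a - b + N) * ih
      + (ascPochhammer ℂ N).eval (c - a) * (ascPochhammer ℂ N).eval (c - b) * hstep

theorem norm_ordinaryHypergeometricCoefficient_le (a b : ℂ) {x : ℝ} (hx : 0 < x)
    (hxc : x ≤ c.re) (n : ℕ) :
    ‖ordinaryHypergeometricCoefficient a b c n‖
      ≤ ‖ordinaryHypergeometricCoefficient a b (x : ℂ) n‖ := by
  have hpos : 0 < (ascPochhammer ℝ n).eval x := ascPochhammer_pos n x hx
  have hcast : (ascPochhammer ℂ n).eval (x : ℂ) = ((ascPochhammer ℝ n).eval x : ℝ) := by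
    simp [ascPochhammer_eval_eq_prod_range]
  simp only [ordinaryHypergeometricCoefficient, norm_mul, norm_inv]
  rw [hcast, Complex.norm_of_nonneg hpos.le]
  gcongr
  exact ascPochhammer_eval_le_norm hx hxc n

theorem tendsto_ordinaryHypergeometricCoefficient_add_natCast (a b c : ℂ) (n : ℕ) :
    Tendsto (fun N : ℕ => ordinaryHypergeometricCoefficient a b (c + N) n) atTop
      (𝓝 (if n = 0 then 1 else 0)) := by
  split_ifs with hn
  · simp [hn, ordinaryHypergeometricCoefficient]
  · have hcobounded : Tendsto (fun N : ℕ => (N : ℂ)) atTop (Bornology.cobounded ℂ) :=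
      tendsto_norm_atTop_iff_cobounded.mp <| by
        simpa using tendsto_natCast_atTop_atTop (R := ℝ)
    have hnorm : Tendsto (fun N : ℕ => ‖c + N‖) atTop atTop :=
      tendsto_norm_atTop_iff_cobounded.mpr ((tendsto_const_add_cobounded c).comp hcobounded)
    have hdeg : 0 < (ascPochhammer ℂ n).degree := by
      rw [← Polynomial.natDegree_pos_iff_degree_pos, ascPochhammer_natDegree]
      exact Nat.pos_of_ne_zero hn
    have hinv := tendsto_inv₀_cobounded.comp
      (tendsto_norm_atTop_iff_cobounded.mp (Polynomial.tendsto_norm_atTop _ hdeg hnorm))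
    simpa [Function.comp_def] using hinv.const_mul _

theorem tendsto_ordinaryHypergeometric_one_add_natCast (a b c : ℂ) :
    Tendsto (fun N : ℕ => ₂F₁ a b (c + N) (1 : ℂ)) atTop (𝓝 1) := by
  obtain ⟨M, hM⟩ := exists_nat_gt (max (-c.re) ((a + b).re - c.re))
  have hM₀ : 0 < c.re + M := by linarith [le_max_left (-c.re) ((a + b).re - c.re)]
  have hM₁ : (a + b).re < c.re + M := by linarith [le_max_right (-c.re) ((a + b).re - c.re)]
  have hbound : Summable (ordinaryHypergeometricCoefficient a b ((c.re + M : ℝ) : ℂ)) := by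
    refine summable_ordinaryHypergeometricCoefficient (fun m h => ?_) ?_
    · have hre := congrArg re h
      simp only [ofReal_re, neg_re, natCast_re] at hre
      linarith [m.cast_nonneg (α := ℝ)]
    · rw [sub_sub, sub_re, ofReal_re]
      linarith
  have hlim := tendsto_tsum_of_dominated_convergence hbound.norm
    (tendsto_ordinaryHypergeometricCoefficient_add_natCast a b c) ?_
  · simpa [ordinaryHypergeometric_eq_tsum] using hlim
  · filter_upwards [eventually_ge_atTop M] with N hN n
    refine norm_ordinaryHypergeometricCoefficient_le a b hM₀ ?_ n
    simpa using hN

theorem ordinaryHypergeometric_one_eq_Gamma (hc : ∀ m : ℕ, c ≠ -m) (hre : 0 < (c - a - b).re) :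
    ₂F₁ a b c (1 : ℂ) = Gamma c * Gamma (c - a - b) / (Gamma (c - a) * Gamma (c - b)) := by
  have hleft := ((tendsto_ascPochhammer_eval_div_inv_Gamma c).mul
    (tendsto_ascPochhammer_eval_div_inv_Gamma (c - a - b))).mul_const (₂F₁ a b c (1 : ℂ))
  have hright := ((tendsto_ascPochhammer_eval_div_inv_Gamma (c - a)).mul
    (tendsto_ascPochhammer_eval_div_inv_Gamma (c - b))).mul
    ((tendsto_add_atTop_iff_nat 1).mpr (tendsto_ordinaryHypergeometric_one_add_natCast a b c))
  have hlimits : (Gamma c)⁻¹ * (Gamma (c - a - b))⁻¹ * ₂F₁ a b c (1 : ℂ)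
      = (Gamma (c - a))⁻¹ * (Gamma (c - b))⁻¹ * 1 := by
    refine tendsto_nhds_unique (hleft.congr' ?_) hright
    filter_upwards [eventually_ne_atTop 0] with n hn
    have hn' : (n : ℂ) ≠ 0 := Nat.cast_ne_zero.mpr hn
    have hpow : (n : ℂ) ^ c * n ^ (c - a - b) = n ^ (c - a) * n ^ (c - b) := by
      rw [← cpow_add _ _ hn', ← cpow_add _ _ hn']
      ring_nf
    have hiter := ordinaryHypergeometric_one_contiguous_iterate hc hre (n + 1)
    rw [div_mul_div_comm, div_mul_div_comm, div_mul_eq_mul_div, div_mul_eq_mul_div, hiter,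
      mul_mul_mul_comm _ _ ((n : ℂ) ^ (c - a - b)), hpow,
      mul_mul_mul_comm ((n : ℂ) ^ (c - a))]
  have hΓc : Gamma c ≠ 0 := Gamma_ne_zero hc
  have hΓ : Gamma (c - a - b) ≠ 0 := Gamma_ne_zero_of_re_pos hre
  rw [← mul_inv, ← mul_inv, mul_one, inv_mul_eq_iff_eq_mul₀ (mul_ne_zero hΓc hΓ)] at hlimits
  rw [hlimits, div_eq_mul_inv]

theorem ordinaryHypergeometric_one_add_one (hc : ∀ m : ℕ, c ≠ -m) (hre : 1 < (c - a - b).re) :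
    ₂F₁ (a + 1) (b + 1) (c + 1) (1 : ℂ) = c / (c - a - b - 1) * ₂F₁ a b c (1 : ℂ) := by
  have hd : c - a - b - 1 ≠ 0 := sub_one_ne_zero_of_one_lt_re hre
  have hsub : c + 1 - (a + 1) - (b + 1) = c - a - b - 1 := by ring
  have hre' : 0 < (c + 1 - (a + 1) - (b + 1)).re := by
    rw [hsub, sub_re, one_re]
    linarith
  have hΓc : Gamma (c + 1) = c * Gamma c := Gamma_add_one c (by simpa using hc 0)
  have hΓ : Gamma (c - a - b) = (c - a - b - 1) * Gamma (c - a - b - 1) := by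
    rw [← Gamma_add_one _ hd, sub_add_cancel]
  rw [ordinaryHypergeometric_one_eq_Gamma (add_one_ne_neg_natCast hc) hre',
    ordinaryHypergeometric_one_eq_Gamma hc (by linarith), hΓc, hΓ, hsub, add_sub_add_right_eq_sub,
    add_sub_add_right_eq_sub]
  field_simp

theorem hasSum_natCast_mul_ordinaryHypergeometricCoefficient (hc : ∀ m : ℕ, c ≠ -m)
    (hre : 1 < (c - a - b).re) :
    HasSum (fun n : ℕ => (n : ℂ) * ordinaryHypergeometricCoefficient a b c n)
      (a * b / (c - a - b - 1) * ₂F₁ a b c (1 : ℂ)) := by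
  have hc0 : c ≠ 0 := by simpa using hc 0
  have hre' : 0 < (c + 1 - (a + 1) - (b + 1)).re := by
    simp only [sub_re, add_re, one_re] at hre ⊢
    linarith
  have hsum := (hasSum_ordinaryHypergeometric_one (add_one_ne_neg_natCast hc) hre').mul_left
    (a * b / c)
  rw [ordinaryHypergeometric_one_add_one hc hre, ← mul_assoc, mul_div_assoc',
    div_mul_cancel₀ _ hc0] at hsum
  simp only [← succ_mul_ordinaryHypergeometricCoefficient_succ] at hsum
  refine (hasSum_nat_add_iff' 1).mp ?_
  simpa using hsum

theorem hasSum_two_mul_add_one_mul_ordinaryHypergeometricCoefficient (hc : ∀ m : ℕ, c ≠ -m)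
    (hre : 1 < (c - a - b).re) :
    HasSum (fun n : ℕ => (2 * n + 1 : ℂ) * ordinaryHypergeometricCoefficient a b c n)
      (Gamma c * Gamma (c - a - b) / (Gamma (c - a) * Gamma (c - b))
        * ((2 * a * b + c - a - b - 1) / (c - a - b - 1))) := by
  have hd : c - a - b - 1 ≠ 0 := sub_one_ne_zero_of_one_lt_re hre
  have hre' : 0 < (c - a - b).re := by linarith
  rw [← ordinaryHypergeometric_one_eq_Gamma hc hre']
  convert! ((hasSum_natCast_mul_ordinaryHypergeometricCoefficient hc hre).mul_left 2).add
    (hasSum_ordinaryHypergeometric_one hc hre') using 1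
  · ext n
    ring
  · field_simp
    ring

end GaussSummation

section PowerSeries

variable {ι 𝕜 : Type*} [RCLike 𝕜] {a : ι → 𝕜} {e : ι → ℕ} {z : 𝕜}

theorem norm_mul_pow_le_of_mem_ball (c : 𝕜) (k : ℕ) (hz : z ∈ ball (0 : 𝕜) 1) :
    ‖c * z ^ k‖ ≤ ‖c‖ := by
  rw [norm_mul, norm_pow]
  exact mul_le_of_le_one_right (norm_nonneg c)
    (pow_le_one₀ (norm_nonneg z) (mem_ball_zero_iff.mp hz).le)

theorem norm_tsum_mul_pow_le (ha : Summable fun i => ‖a i‖) (e : ι → ℕ)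
    (hz : z ∈ ball (0 : 𝕜) 1) : ‖∑' i, a i * z ^ e i‖ ≤ ∑' i, ‖a i‖ :=
  tsum_of_norm_bounded ha.hasSum fun i => norm_mul_pow_le_of_mem_ball (a i) (e i) hz

theorem hasDerivAt_tsum_mul_pow (ha : Summable fun i => ‖a i‖)
    (ha' : Summable fun i => ‖a i * e i‖) (hz : z ∈ ball (0 : 𝕜) 1) :
    HasDerivAt (fun w => ∑' i, a i * w ^ e i) (∑' i, a i * e i * z ^ (e i - 1)) z := by
  have hzero : (0 : 𝕜) ∈ ball (0 : 𝕜) 1 := mem_ball_self one_pos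
  have hderiv (i : ι) (w : 𝕜) :
      HasDerivAt (fun w => a i * w ^ e i) (a i * e i * w ^ (e i - 1)) w := by
    simpa only [mul_assoc] using (hasDerivAt_pow (e i) w).const_mul (a i)
  have hsummable : Summable fun i => a i * (0 : 𝕜) ^ e i :=
    Summable.of_norm_bounded ha fun i => norm_mul_pow_le_of_mem_ball _ _ hzero
  exact hasDerivAt_tsum_of_isPreconnected (u := fun i => ‖a i * e i‖)
    (g := fun i w => a i * w ^ e i) (g' := fun i w => a i * e i * w ^ (e i - 1)) ha' isOpen_ball
    (convex_ball (0 : 𝕜) 1).isPreconnected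
    (fun i w _ => hderiv i w) (fun i w hw => norm_mul_pow_le_of_mem_ball _ _ hw) hzero
    hsummable hz

end PowerSeries

section UniformConvexity

theorem re_div_nonneg_of_norm_sub_le_norm_add {x y : ℂ} (h : ‖x - y‖ ≤ ‖x + y‖) :
    0 ≤ (x / y).re := by
  have hsq : normSq (x - y) ≤ normSq (x + y) := by
    rw [normSq_eq_norm_sq, normSq_eq_norm_sq]
    gcongr
  rw [normSq_sub, normSq_add] at hsq
  rw [div_eq_mul_inv, inv_def, ← mul_assoc, re_mul_ofReal]
  exact mul_nonneg (by linarith) (inv_nonneg.mpr (normSq_nonneg y))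

theorem uniformlyConvexOnDisk_id_of_norm_deriv_le {g : ℂ → ℂ}
    (hg : ∀ z ∈ ball (0 : ℂ) 1, ‖deriv g z‖ + 2 * ‖deriv (deriv g) z‖ ≤ 1) :
    UniformlyConvexOnDisk (fun z => z) g := by
  intro z hz ζ hζ _
  have hid : deriv (fun w : ℂ => w) = fun _ => 1 := funext fun w => deriv_id w
  simp only [hid, deriv_const, mul_one, mul_zero, add_zero]
  set w := z - ζ
  set u := deriv g z
  set v := deriv (deriv g) z
  have hw : ‖w‖ ≤ 2 := by
    linarith [norm_sub_le z ζ, mem_ball_zero_iff.mp hz, mem_ball_zero_iff.mp hζ]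
  have huv : 2 * ‖u‖ + ‖w‖ * ‖v‖ ≤ 2 - ‖w‖ * ‖v‖ := by
    linarith [hg z hz, mul_le_mul_of_nonneg_right hw (norm_nonneg v)]
  apply re_div_nonneg_of_norm_sub_le_norm_add
  calc ‖w + conj (w * u) + conj (w ^ 2 * v) - (w - conj (w * u))‖
      = ‖2 * conj (w * u) + conj (w ^ 2 * v)‖ := by ring_nf
    _ ≤ ‖w‖ * (2 * ‖u‖ + ‖w‖ * ‖v‖) := by
      refine (norm_add_le _ _).trans_eq ?_
      simp only [norm_mul, norm_conj, norm_pow, Complex.norm_ofNat]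
      ring
    _ ≤ ‖w‖ * (2 - ‖w‖ * ‖v‖) := mul_le_mul_of_nonneg_left huv (norm_nonneg w)
    _ = ‖2 * w‖ - ‖conj (w ^ 2 * v)‖ := by
      simp only [norm_mul, norm_conj, norm_pow, Complex.norm_ofNat]
      ring
    _ ≤ ‖2 * w + conj (w ^ 2 * v)‖ := norm_sub_le_norm_add _ _
    _ = ‖w + conj (w * u) + conj (w ^ 2 * v) + (w - conj (w * u))‖ := by ring_nf

theorem uniformlyConvexOnDisk_id_of_tsum_le_one {β : ℕ → ℂ}
    (hβ : Summable fun n : ℕ => ((n + 1) * (2 * (n + 1) - 1) : ℝ) * ‖β n‖)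
    (hβ_le : ∑' n : ℕ, ((n + 1) * (2 * (n + 1) - 1) : ℝ) * ‖β n‖ ≤ 1) :
    UniformlyConvexOnDisk (fun z => z) fun z => ∑' n, β n * z ^ (n + 1) := by
  let β₁ (n : ℕ) : ℂ := β n * (n + 1 : ℕ)
  let β₂ (n : ℕ) : ℂ := β₁ n * n
  have hnorm (n : ℕ) :
      ((n + 1) * (2 * (n + 1) - 1) : ℝ) * ‖β n‖ = ‖β₁ n‖ + 2 * ‖β₂ n‖ := by
    simp only [β₁, β₂, norm_mul, Complex.norm_natCast]
    push_cast
    ring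
  simp only [hnorm] at hβ hβ_le
  have hβ₁ : Summable fun n => ‖β₁ n‖ :=
    hβ.of_nonneg_of_le (fun n => norm_nonneg _) fun n => by linarith [norm_nonneg (β₂ n)]
  have hβ₂ : Summable fun n => ‖β₂ n‖ :=
    hβ.of_nonneg_of_le (fun n => norm_nonneg _) fun n => by
      linarith [norm_nonneg (β₁ n), norm_nonneg (β₂ n)]
  have hβ₀ : Summable fun n => ‖β n‖ := hβ₁.of_nonneg_of_le (fun n => norm_nonneg _) fun n => by
    rw [norm_mul, Complex.norm_natCast]
    exact le_mul_of_one_le_right (norm_nonneg _) (by simp)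
  have hderiv {z : ℂ} (hz : z ∈ ball (0 : ℂ) 1) :
      deriv (fun w => ∑' n, β n * w ^ (n + 1)) z = ∑' n, β₁ n * z ^ n :=
    (hasDerivAt_tsum_mul_pow (e := (· + 1)) hβ₀ hβ₁ hz).deriv
  refine uniformlyConvexOnDisk_id_of_norm_deriv_le fun z hz => ?_
  have hderiv₂ : deriv (deriv fun w => ∑' n, β n * w ^ (n + 1)) z = ∑' n, β₂ n * z ^ (n - 1) := by
    have hev : deriv (fun w => ∑' n, β n * w ^ (n + 1)) =ᶠ[𝓝 z] fun w => ∑' n, β₁ n * w ^ n := by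
      filter_upwards [isOpen_ball.mem_nhds hz] with w hw using hderiv hw
    rw [hev.deriv_eq]
    exact (hasDerivAt_tsum_mul_pow (e := id) hβ₁ hβ₂ hz).deriv
  calc ‖deriv (fun w => ∑' n, β n * w ^ (n + 1)) z‖
        + 2 * ‖deriv (deriv fun w => ∑' n, β n * w ^ (n + 1)) z‖
      ≤ ∑' n, ‖β₁ n‖ + 2 * ∑' n, ‖β₂ n‖ := by
        rw [hderiv hz, hderiv₂]
        gcongr
        · exact norm_tsum_mul_pow_le hβ₁ id hz
        · exact norm_tsum_mul_pow_le hβ₂ (· - 1) hz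
    _ = ∑' n, (‖β₁ n‖ + 2 * ‖β₂ n‖) := by
        rw [hβ₁.tsum_add (hβ₂.mul_left 2), tsum_mul_left]
    _ ≤ 1 := hβ_le

end UniformConvexity

section HypergeometricPrimitive

open scoped ComplexOrder

variable {a b c α : ℂ}

theorem add_natCast_mul_add_natCast_nonneg {a b : ℝ} (ha : -1 < a) (hb : -1 < b)
    (hab : 0 ≤ a * b) (n : ℕ) : 0 ≤ (a + n) * (b + n) := by
  rcases n.eq_zero_or_pos with rfl | hn
  · simpa using hab
  · have hn' : (1 : ℝ) ≤ n := Nat.one_le_cast.mpr hn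
    exact mul_nonneg (by linarith) (by linarith)

theorem ordinaryHypergeometricCoefficient_nonneg {c : ℝ} (hc : 0 < c)
    (hab : ∀ n : ℕ, 0 ≤ (a + n) * (b + n)) (n : ℕ) :
    0 ≤ ordinaryHypergeometricCoefficient a b (c : ℂ) n := by
  induction n with
  | zero => simp [ordinaryHypergeometricCoefficient]
  | succ n ih =>
    have hcn : 0 < (c : ℂ) + n := by
      exact_mod_cast add_pos_of_pos_of_nonneg hc (n.cast_nonneg (α := ℝ))
    have hn : 0 < ((n + 1 : ℕ) : ℂ) := Nat.cast_pos.mpr n.succ_pos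
    have hsucc := succ_mul_add_mul_ordinaryHypergeometricCoefficient_succ (a := a) (b := b) hcn.ne'
    rw [eq_div_of_mul_eq (mul_pos hn hcn).ne' ((mul_comm _ _).trans hsucc)]
    exact div_nonneg (mul_nonneg (hab n) ih) (mul_pos hn hcn).le

theorem ordinaryHypergeometricCoefficient_ofReal_nonneg {a b c : ℝ} (ha : -1 < a) (hb : -1 < b)
    (hab : 0 ≤ a * b) (hc : 0 < c) (n : ℕ) :
    0 ≤ ordinaryHypergeometricCoefficient (a : ℂ) b c n :=
  ordinaryHypergeometricCoefficient_nonneg hc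
    (fun m => by exact_mod_cast add_natCast_mul_add_natCast_nonneg ha hb hab m) n

theorem ordinaryHypergeometricCoefficient_conj_nonneg {c : ℝ} (a : ℂ) (hc : 0 < c) (n : ℕ) :
    0 ≤ ordinaryHypergeometricCoefficient a (conj a) (c : ℂ) n :=
  ordinaryHypergeometricCoefficient_nonneg hc
    (fun m => by simpa using mul_star_self_nonneg (a + m)) n

theorem bc3_eq_ordinaryHypergeometricCoefficient (a b c α : ℂ) (n : ℕ) :
    bc3 a b c α n = α / 2 * ordinaryHypergeometricCoefficient a b c n / (n + 1 : ℕ) := by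
  simp only [bc3, poch, ordinaryHypergeometricCoefficient, Nat.cast_succ, div_eq_mul_inv, mul_inv]
  ring

theorem mul_hypFPrim_eq_tsum_bc3 (a b c α z : ℂ) :
    α / 2 * hypFPrim a b c z = ∑' n, bc3 a b c α n * z ^ (n + 1) := by
  rw [hypFPrim, ← tsum_mul_left]
  refine tsum_congr fun n => ?_
  rw [bc3]
  ring

theorem hasSum_mul_norm_bc3 (hc : ∀ m : ℕ, c ≠ -m) (hre : 1 < (c - a - b).re)
    (hnonneg : ∀ n, 0 ≤ ordinaryHypergeometricCoefficient a b c n) (α : ℂ) :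
    HasSum (fun n : ℕ => (((n + 1) * (2 * (n + 1) - 1) * ‖bc3 a b c α n‖ : ℝ) : ℂ))
      (‖α‖ * (Gamma c * Gamma (c - a - b) / (Gamma (c - a) * Gamma (c - b)))
        * ((2 * a * b + c - a - b - 1) / (c - a - b - 1)) / 2) := by
  convert! (hasSum_two_mul_add_one_mul_ordinaryHypergeometricCoefficient hc hre).mul_left
    (‖α‖ / 2 : ℂ) using 1
  · ext n
    have hn : (n : ℂ) + 1 ≠ 0 := Nat.cast_add_one_ne_zero n
    have ht : (‖ordinaryHypergeometricCoefficient a b c n‖ : ℂ)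
        = ordinaryHypergeometricCoefficient a b c n := RCLike.norm_of_nonneg' (hnonneg n)
    rw [bc3_eq_ordinaryHypergeometricCoefficient, norm_div, norm_mul, norm_div,
      Complex.norm_natCast, Complex.norm_ofNat]
    push_cast [ht]
    field_simp
    ring
  · ring

theorem hypergeom_uniformly_convex_c_general (hc : ∀ m : ℕ, c ≠ -m)
    (hre : (a + b).re + 1 < c.re)
    (hnonneg : ∀ n, 0 ≤ ordinaryHypergeometricCoefficient a b c n)
    (hQ : (‖α‖ * (Gamma c * Gamma (c - a - b) / (Gamma (c - a) * Gamma (c - b)))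
      * ((2 * a * b + c - a - b - 1) / (c - a - b - 1))).re ≤ 2) :
    (Summable fun n : ℕ => ((n + 1) * (2 * (n + 1) - 1) : ℝ) * ‖bc3 a b c α n‖) ∧
    (∑' n : ℕ, ((n + 1) * (2 * (n + 1) - 1) : ℝ) * ‖bc3 a b c α n‖) ≤ 1 ∧
    UniformlyConvexOnDisk (fun z => z) (fun z => α / 2 * hypFPrim a b c z) := by
  have hre' : 1 < (c - a - b).re := by
    rw [sub_sub, sub_re]
    linarith
  have hsum := hasSum_re (hasSum_mul_norm_bc3 hc hre' hnonneg α)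
  simp only [ofReal_re, div_ofNat_re] at hsum
  have hle : ∑' n : ℕ, ((n + 1) * (2 * (n + 1) - 1) : ℝ) * ‖bc3 a b c α n‖ ≤ 1 := by
    rw [hsum.tsum_eq]
    linarith
  refine ⟨hsum.summable, hle, ?_⟩
  simp_rw [mul_hypFPrim_eq_tsum_bc3]
  exact uniformlyConvexOnDisk_id_of_tsum_le_one hsum.summable hle

end HypergeometricPrimitive

/-- Theorem 6(c): under the stated conditions on `a, b, c, α`, the
coefficients of `g₃(z) = (α/2) ∫₀ᶻ F(a,b;c;t) dt` satisfy `∑_{n≥1} n(2n-1)|bₙ| ≤ 1`;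
consequently `f₃(z) = z + conj(g₃(z))` is uniformly convex in `𝔻`. -/
theorem hypergeom_uniformly_convex_c (a b : ℂ)
    (hab : (∃ a' b' : ℝ, a = (a' : ℂ) ∧ b = (b' : ℂ) ∧ -1 < a' ∧ -1 < b' ∧ 0 < a' * b') ∨
           (a ≠ 0 ∧ b ≠ 0 ∧ b = conj a))
    (c : ℝ) (hc : 0 < c) (hc1 : (a + b).re + 1 < c)
    (α : ℂ) (hα : ‖α‖ < 1)
    (hQ : ∃ q : ℝ, 0 < q ∧ q ≤ 2 ∧
      (q : ℂ) = (‖α‖ : ℂ) * (Complex.Gamma (c : ℂ) * Complex.Gamma ((c : ℂ) - a - b)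
          / (Complex.Gamma ((c : ℂ) - a) * Complex.Gamma ((c : ℂ) - b)))
        * ((2 * a * b + (c : ℂ) - a - b - 1) / ((c : ℂ) - a - b - 1))) :
    (Summable fun n : ℕ =>
      (((n + 1) * (2 * (n + 1) - 1) : ℝ)) * ‖bc3 a b (c : ℂ) α n‖) ∧
    (∑' n : ℕ, (((n + 1) * (2 * (n + 1) - 1) : ℝ)) * ‖bc3 a b (c : ℂ) α n‖) ≤ 1 ∧
    UniformlyConvexOnDisk (fun z => z)
      (fun z => α / 2 * hypFPrim a b (c : ℂ) z) := by
  obtain ⟨q, -, hq2, hq⟩ := hQ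
  have hc' (m : ℕ) : (c : ℂ) ≠ -m := by
    exact_mod_cast (show -(m : ℝ) < c by linarith [m.cast_nonneg (α := ℝ)]).ne'
  refine hypergeom_uniformly_convex_c_general hc' hc1 (fun n => ?_) (by rwa [← hq, ofReal_re])
  rcases hab with ⟨a', b', rfl, rfl, ha, hb, hab⟩ | ⟨-, -, rfl⟩
  · exact ordinaryHypergeometricCoefficient_ofReal_nonneg ha hb hab.le hc n
  · exact ordinaryHypergeometricCoefficient_conj_nonneg a hc n
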